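/- Let H be a group, m ≥ 0 an integer, R = ℤ/mℤ, and let μ: (H/H₂) ⊗ (H/H₂) ⊗ R → I_R²(H)/I_R³(H) be the homomorphism determined by μ(aH₂ ⊗ bH₂ ⊗ r) = r·(a−1)(b−1) + I_R³(H). Let p: H₂·H^m → I_R²(H)/I_R³(H) be the homomorphism h' ↦ (h'−1) + I_R³(H) (well defined since h'−1 ∈ I_R²(H) for h' ∈ H₂H^m). Then the preimage μ^{-1}(p(H₂H^m)) equals the set Y = Im(ℓ) + {C(m,2)·(hH₂ ⊗ hH₂ ⊗ 1_R) : h ∈ H}, where ℓ: (H/H₂)∧(H/H₂) → (H/H₂)⊗(H/H₂)⊗R sends x∧y to x⊗y⊗1_R − y⊗x⊗1_R and C(m,2) = m(m−1)/2; in particular Y is a subgroup of (H/H₂)⊗(H/H₂)⊗R. -/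

import Mathlib

open MonoidAlgebra TensorProduct

/-- The augmentation ideal `I_R(H)` of `R(H)`, as the `R`-submodule spanned by the
elements `a - 1`, `a ∈ H`. -/
noncomputable def augSubmodule (R : Type*) [CommRing R] (H : Type*) [Group H] :
    Submodule R (MonoidAlgebra R H) :=
  Submodule.span R {x | ∃ a : H, x = of R H a - 1}

/-- The abelianization `H/H₂` of `H`, written additively. -/
abbrev abQuot (H : Type*) [Group H] := Additive (Abelianization H)

/-- The canonical map `H → H/H₂` (additive notation). -/
def abMk {H : Type*} [Group H] (a : H) : abQuot H :=
  Additive.ofMul (Abelianization.of a)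

/-- The exterior square `A ∧ A` of an abelian group. -/
abbrev wedgeSquare (A : Type*) [AddCommGroup A] :=
  (A ⊗[ℤ] A) ⧸ Submodule.span ℤ {x : A ⊗[ℤ] A | ∃ a : A, x = a ⊗ₜ[ℤ] a}

/-!
Write `A = H/H₂`, `X = A ⊗ A ⊗ R` and let `p` be the map `h ↦ [h - 1]`. Modulo `I³` one has
`[a, b] - 1 ≡ (a - 1)(b - 1) - (b - 1)(a - 1)` and `aᵐ - 1 ≡ C(m,2) (a - 1)²`, and `p` is additive
on `H₂Hᵐ`. Hence `μ` maps the subgroup `Y` spanned by all `x ⊗ y ⊗ 1 - y ⊗ x ⊗ 1` and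
`C(m,2) (x ⊗ x ⊗ 1)` onto `p(H₂Hᵐ)`. As `2 C(m,2)` kills `X`, the map `x ↦ C(m,2) (x ⊗ x ⊗ 1)` is
additive modulo the antisymmetric elements, so `Y` has the asserted form.

It remains to see that `ker μ ≤ Y`. The pairing `β : A × A → X/Y` induced by `⊗` is symmetric, so
it is the cocycle of an abelian extension `E` of `A` by `X/Y`. The failure of the section `A → E`
to be additive is `β`, so its linear extension `R(H) → E/mE` kills `I³` and sends `(a - 1)(b - 1)`
to `± β(a, b)`. Finally `X/Y → E/mE` is injective since
`m (t, a) = (m t + C(m,2) β(a, a), m a) = (0, m a)` in `E`.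
-/

open scoped commutatorElement

section BilinearMap

variable {A X : Type*} [AddCommGroup A] [AddCommGroup X] (B : A →ₗ[ℤ] A →ₗ[ℤ] X)

/-- The subgroup spanned by the differences `B x y - B y x`: modulo it `B` is symmetric. -/
def antisymmSpan : Submodule ℤ X :=
  Submodule.span ℤ {z | ∃ x y, z = B x y - B y x}

/-- The subgroup generated by the differences `B x y - B y x` and the elements `c • B x x`. For
`B x y = x ⊗ y ⊗ 1` and `c = C(m,2)` this is the group `Y`. -/
def antisymmSquareSpan (c : ℕ) : Submodule ℤ X :=
  antisymmSpan B ⊔ Submodule.span ℤ {z | ∃ x, z = c • B x x}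

variable {B} {c : ℕ}

theorem sub_swap_mem_antisymmSpan (x y : A) : B x y - B y x ∈ antisymmSpan B :=
  Submodule.subset_span ⟨x, y, rfl⟩

theorem sub_swap_mem_antisymmSquareSpan (x y : A) : B x y - B y x ∈ antisymmSquareSpan B c :=
  Submodule.mem_sup_left (sub_swap_mem_antisymmSpan x y)

theorem nsmul_self_mem_antisymmSquareSpan (x : A) : c • B x x ∈ antisymmSquareSpan B c :=
  Submodule.mem_sup_right (Submodule.subset_span ⟨x, rfl⟩)

theorem antisymmSquareSpan_le_iff {N : Submodule ℤ X} :
    antisymmSquareSpan B c ≤ N ↔ (∀ x y, B x y - B y x ∈ N) ∧ ∀ x, c • B x x ∈ N := by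
  simp only [antisymmSquareSpan, antisymmSpan, sup_le_iff, Submodule.span_le, Set.subset_def]
  aesop

/-- The map `x ↦ c • B x x` modulo the differences `B x y - B y x`; the cross term in `x + y` is
`2c • B x y`. -/
def nsmulSquareHom (hc : ∀ x y, (2 * c) • B x y = 0) : A →+ X ⧸ antisymmSpan B :=
  AddMonoidHom.mk' (fun x ↦ Submodule.Quotient.mk (c • B x x)) fun x y ↦ by
    rw [← Submodule.Quotient.mk_add, Submodule.Quotient.eq]
    have cross_terms : c • B (x + y) (x + y) - (c • B x x + c • B y y) =
        (2 * c) • B x y - c • (B x y - B y x) := by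
      simp only [map_add, LinearMap.add_apply]
      module
    rw [cross_terms, hc, zero_sub]
    exact neg_mem (nsmul_mem (sub_swap_mem_antisymmSpan x y) c)

theorem mem_antisymmSquareSpan_iff (hc : ∀ x y, (2 * c) • B x y = 0) {t : X} :
    t ∈ antisymmSquareSpan B c ↔ ∃ x, t - c • B x x ∈ antisymmSpan B := by
  constructor
  · have le_comap : antisymmSquareSpan B c ≤
        (nsmulSquareHom hc).range.toIntSubmodule.comap (antisymmSpan B).mkQ := by
      refine antisymmSquareSpan_le_iff.2 ⟨fun x y ↦ ⟨0, ?_⟩, fun x ↦ ⟨x, rfl⟩⟩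
      rw [map_zero, eq_comm]
      exact (Submodule.Quotient.mk_eq_zero _).2 (sub_swap_mem_antisymmSpan x y)
    intro ht
    obtain ⟨x, hx⟩ := le_comap ht
    exact ⟨x, (Submodule.Quotient.eq _).1 hx.symm⟩
  · rintro ⟨x, hx⟩
    rw [← sub_add_cancel t (c • B x x)]
    exact add_mem (Submodule.mem_sup_left hx) (nsmul_self_mem_antisymmSquareSpan x)

theorem range_eq_antisymmSpan {ℓ : wedgeSquare A →ₗ[ℤ] X}
    (hℓ : ∀ x y, ℓ (Submodule.Quotient.mk (x ⊗ₜ[ℤ] y)) = B x y - B y x) :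
    LinearMap.range ℓ = antisymmSpan B := by
  apply le_antisymm
  · rintro _ ⟨w, rfl⟩
    obtain ⟨t, rfl⟩ := Submodule.Quotient.mk_surjective _ w
    induction t using TensorProduct.induction_on with
    | zero => rw [Submodule.Quotient.mk_zero, map_zero]; exact zero_mem _
    | tmul x y => rw [hℓ]; exact sub_swap_mem_antisymmSpan x y
    | add s t hs ht => rw [Submodule.Quotient.mk_add, map_add]; exact add_mem hs ht
  · refine Submodule.span_le.2 ?_
    rintro _ ⟨x, y, rfl⟩
    exact ⟨_, hℓ x y⟩

end BilinearMap

/-- The extension of `A` by `T` with the symmetric bilinear map `β` as cocycle: pairs `(t, a)` with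
`(t, a) + (s, b) = (t + s + β a b, a + b)`. -/
@[ext]
structure SymmExtension {A T : Type*} [AddCommGroup A] [AddCommGroup T] (β : A →ₗ[ℤ] A →ₗ[ℤ] T)
    (hβ : ∀ a b, β a b = β b a) where
  fiber : T
  base : A

namespace SymmExtension

variable {A T : Type*} [AddCommGroup A] [AddCommGroup T] {β : A →ₗ[ℤ] A →ₗ[ℤ] T}
  {hβ : ∀ a b, β a b = β b a}

instance : Add (SymmExtension β hβ) :=
  ⟨fun x y ↦ ⟨x.fiber + y.fiber + β x.base y.base, x.base + y.base⟩⟩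

instance : Zero (SymmExtension β hβ) := ⟨⟨0, 0⟩⟩

instance : Neg (SymmExtension β hβ) := ⟨fun x ↦ ⟨-x.fiber + β x.base x.base, -x.base⟩⟩

@[simp] theorem fiber_add (x y : SymmExtension β hβ) :
    (x + y).fiber = x.fiber + y.fiber + β x.base y.base := rfl

@[simp] theorem base_add (x y : SymmExtension β hβ) : (x + y).base = x.base + y.base := rfl

@[simp] theorem fiber_zero : (0 : SymmExtension β hβ).fiber = 0 := rfl

@[simp] theorem base_zero : (0 : SymmExtension β hβ).base = 0 := rfl

@[simp] theorem fiber_neg (x : SymmExtension β hβ) :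
    (-x).fiber = -x.fiber + β x.base x.base := rfl

@[simp] theorem base_neg (x : SymmExtension β hβ) : (-x).base = -x.base := rfl

instance : AddCommGroup (SymmExtension β hβ) where
  add_assoc x y z := by
    ext
    · simp only [fiber_add, base_add, map_add, LinearMap.add_apply]
      abel
    · exact add_assoc _ _ _
  zero_add x := by ext <;> simp
  add_zero x := by ext <;> simp
  neg_add_cancel x := by ext <;> simp
  add_comm x y := by
    ext
    · rw [fiber_add, fiber_add, hβ, add_comm x.fiber]
    · exact add_comm _ _
  nsmul := nsmulRec
  zsmul := zsmulRec

@[simp] theorem base_nsmul (n : ℕ) (x : SymmExtension β hβ) : (n • x).base = n • x.base := by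
  induction n with
  | zero => simp
  | succ n ih => rw [succ_nsmul, base_add, ih, succ_nsmul]

theorem fiber_nsmul (n : ℕ) (x : SymmExtension β hβ) :
    (n • x).fiber = n • x.fiber + n.choose 2 • β x.base x.base := by
  induction n with
  | zero => simp
  | succ n ih =>
    rw [succ_nsmul, fiber_add, ih, base_nsmul, map_nsmul, LinearMap.smul_apply,
      Nat.choose_succ_succ n 1, Nat.choose_one_right]
    module

variable (β hβ) in
/-- The inclusion of the kernel `T` into the extension, reduced modulo `m`. -/
def inlModN (m : ℕ) : T →+ ModN (SymmExtension β hβ) m :=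
  (ModN.mkQ m).comp (AddMonoidHom.mk' (fun t ↦ ⟨t, 0⟩) fun s t ↦ by ext <;> simp)

theorem inlModN_injective {m : ℕ} (hT : ∀ t : T, m • t = 0)
    (hdiag : ∀ a, m.choose 2 • β a a = 0) : Function.Injective (inlModN β hβ m) := by
  rw [injective_iff_map_eq_zero]
  intro t ht
  obtain ⟨x, hx⟩ := (Submodule.Quotient.mk_eq_zero _).1 ht
  have hx : m • x = ⟨t, 0⟩ := by simpa using hx
  simpa [fiber_nsmul, hT, hdiag, eq_comm] using congrArg fiber hx

variable (β hβ) in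
/-- The negative of the set-theoretic section `A → T × A`, reduced modulo `m`. The sign makes its
defect of additivity equal to `β`, rather than `-β`. -/
def negSectionModN (m : ℕ) (a : A) : ModN (SymmExtension β hβ) m :=
  -ModN.mkQ m ⟨0, a⟩

theorem negSectionModN_zero (m : ℕ) : negSectionModN β hβ m 0 = 0 :=
  neg_eq_zero.2 (map_zero (ModN.mkQ m))

theorem negSectionModN_add (m : ℕ) (a b : A) :
    negSectionModN β hβ m (a + b) =
      negSectionModN β hβ m a + negSectionModN β hβ m b + inlModN β hβ m (β a b) := by
  have section_add :
      (⟨0, a⟩ + ⟨0, b⟩ : SymmExtension β hβ) = ⟨β a b, 0⟩ + ⟨0, a + b⟩ := by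
    ext <;> simp
  have mkQ_section_add : ModN.mkQ m (⟨0, a⟩ : SymmExtension β hβ) + ModN.mkQ m ⟨0, b⟩ =
      inlModN β hβ m (β a b) + ModN.mkQ m ⟨0, a + b⟩ := by
    rw [← map_add, section_add, map_add]
    rfl
  simp only [negSectionModN]
  rw [← neg_add, mkQ_section_add]
  abel

end SymmExtension

section GroupAlgebra

variable {R H : Type*} [CommRing R] [Group H]

theorem of_sub_one_mem_augSubmodule (a : H) : of R H a - 1 ∈ augSubmodule R H :=
  Submodule.subset_span ⟨a, rfl⟩

theorem of_mul_sub_one (a b : H) :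
    of R H (a * b) - 1 =
      (of R H a - 1) * (of R H b - 1) + ((of R H a - 1) + (of R H b - 1)) := by
  rw [map_mul]
  noncomm_ring

theorem augSubmodule_mul_self_le : augSubmodule R H * augSubmodule R H ≤ augSubmodule R H := by
  conv_lhs => rw [augSubmodule, Submodule.span_mul_span]
  rw [Submodule.span_le]
  rintro _ ⟨_, ⟨a, rfl⟩, _, ⟨b, rfl⟩, rfl⟩
  have := eq_sub_of_add_eq (of_mul_sub_one (R := R) a b).symm
  simp only [this, SetLike.mem_coe]
  exact sub_mem (of_sub_one_mem_augSubmodule _)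
    (add_mem (of_sub_one_mem_augSubmodule _) (of_sub_one_mem_augSubmodule _))

variable {n : ℕ}

theorem augSubmodule_pow_succ_le [NeZero n] :
    augSubmodule R H ^ (n + 1) ≤ augSubmodule R H ^ n := by
  obtain ⟨k, rfl⟩ := Nat.exists_eq_succ_of_ne_zero (NeZero.ne n)
  rw [pow_succ, pow_succ, mul_assoc]
  exact mul_le_mul_right augSubmodule_mul_self_le _

theorem mul_of_sub_one_mem_augSubmodule_pow_succ {x : MonoidAlgebra R H}
    (hx : x ∈ augSubmodule R H ^ n) (a : H) : x * (of R H a - 1) ∈ augSubmodule R H ^ (n + 1) :=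
  pow_succ (augSubmodule R H) n ▸ Submodule.mul_mem_mul hx (of_sub_one_mem_augSubmodule a)

theorem of_sub_one_mul_of_sub_one_mem (a b : H) :
    (of R H a - 1) * (of R H b - 1) ∈ augSubmodule R H ^ 2 :=
  mul_of_sub_one_mem_augSubmodule_pow_succ (n := 1)
    ((pow_one (augSubmodule R H)).symm ▸ of_sub_one_mem_augSubmodule a) b

theorem mk_of_mul_sub_one {a : H} (ha : of R H a - 1 ∈ augSubmodule R H ^ n) (b : H) :
    (Submodule.Quotient.mk (of R H (a * b) - 1) : MonoidAlgebra R H ⧸ augSubmodule R H ^ (n + 1)) =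
      Submodule.Quotient.mk (of R H a - 1) + Submodule.Quotient.mk (of R H b - 1) := by
  rw [← Submodule.Quotient.mk_add, Submodule.Quotient.eq, of_mul_sub_one, add_sub_cancel_right]
  exact mul_of_sub_one_mem_augSubmodule_pow_succ ha b

theorem mk_of_commutator_sub_one (a b : H) :
    (Submodule.Quotient.mk (of R H ⁅a, b⁆ - 1) : MonoidAlgebra R H ⧸ augSubmodule R H ^ 3) =
      Submodule.Quotient.mk
        ((of R H a - 1) * (of R H b - 1) - (of R H b - 1) * (of R H a - 1)) := by
  set x : MonoidAlgebra R H :=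
    (of R H a - 1) * (of R H b - 1) - (of R H b - 1) * (of R H a - 1) with hx
  have hx_mem : x ∈ augSubmodule R H ^ 2 :=
    sub_mem (of_sub_one_mul_of_sub_one_mem a b) (of_sub_one_mul_of_sub_one_mem b a)
  have x_mul : x * of R H (b * a)⁻¹ = of R H ⁅a, b⁆ - 1 := by
    have x_eq : x = of R H (a * b) - of R H (b * a) := by
      rw [hx, map_mul, map_mul]
      noncomm_ring
    rw [x_eq, sub_mul, ← map_mul, ← map_mul, mul_inv_cancel, map_one, commutatorElement_def,
      mul_inv_rev, mul_assoc (a * b)]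
  rw [Submodule.Quotient.eq, ← x_mul, ← mul_sub_one]
  exact mul_of_sub_one_mem_augSubmodule_pow_succ hx_mem _

theorem mk_of_pow_sub_one (a : H) (k : ℕ) :
    (Submodule.Quotient.mk (of R H (a ^ k) - 1) : MonoidAlgebra R H ⧸ augSubmodule R H ^ 3) =
      Submodule.Quotient.mk
        (k • (of R H a - 1) + k.choose 2 • ((of R H a - 1) * (of R H a - 1))) := by
  induction k with
  | zero => rw [pow_zero, map_one]; simp
  | succ k ih =>
    rw [Submodule.Quotient.eq] at ih ⊢
    set x := of R H a - 1
    set d := of R H (a ^ k) - 1 - (k • x + k.choose 2 • (x * x)) with hd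
    have hxxx : x * x * x ∈ augSubmodule R H ^ 3 :=
      mul_of_sub_one_mem_augSubmodule_pow_succ (of_sub_one_mul_of_sub_one_mem a a) a
    have hdx : d * x ∈ augSubmodule R H ^ 3 :=
      augSubmodule_pow_succ_le (mul_of_sub_one_mem_augSubmodule_pow_succ ih a)
    have next_difference :
        of R H (a ^ (k + 1)) - 1 - ((k + 1) • x + (k + 1).choose 2 • (x * x)) =
          d * x + d + k.choose 2 • (x * x * x) := by
      rw [pow_succ, of_mul_sub_one, Nat.choose_succ_succ k 1, Nat.choose_one_right, hd]
      simp only [sub_mul, add_mul, smul_mul_assoc]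
      module
    rw [next_difference]
    exact add_mem (add_mem hdx ih) (nsmul_mem hxxx _)

variable (R H n) in
/-- The dimension subgroup `D_n = {h | h - 1 ∈ I_R^n(H)}`. The case `n = 0` is excluded since
`augSubmodule R H ^ 0` consists of the constants only. -/
def dimensionSubgroup [NeZero n] : Subgroup H where
  carrier := {h | of R H h - 1 ∈ augSubmodule R H ^ n}
  one_mem' := by simp only [Set.mem_ofPred_eq, map_one, sub_self, zero_mem]
  mul_mem' {h k} hh hk := by
    rw [Set.mem_ofPred_eq, of_mul_sub_one]
    exact add_mem (augSubmodule_pow_succ_le (mul_of_sub_one_mem_augSubmodule_pow_succ hh k))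
      (add_mem hh hk)
  inv_mem' {h} hh := by
    have inv_sub_one :
        of R H h⁻¹ - 1 = -((of R H h - 1) * (of R H h⁻¹ - 1) + (of R H h - 1)) := by
      rw [eq_neg_iff_add_eq_zero, add_comm, add_assoc, ← of_mul_sub_one, mul_inv_cancel, map_one,
        sub_self]
    rw [Set.mem_ofPred_eq, inv_sub_one]
    exact neg_mem (add_mem
      (augSubmodule_pow_succ_le (mul_of_sub_one_mem_augSubmodule_pow_succ hh _)) hh)

variable (R H n) in
/-- The homomorphism `D_n → R(H) / I_R^{n+1}(H)`, `h ↦ h - 1`. -/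
noncomputable def ofSubOneHom [NeZero n] :
    Additive (dimensionSubgroup R H n) →+ MonoidAlgebra R H ⧸ augSubmodule R H ^ (n + 1) :=
  AddMonoidHom.mk' (fun h ↦ Submodule.Quotient.mk (of R H h.toMul - 1))
    fun h k ↦ mk_of_mul_sub_one h.toMul.2 k.toMul

theorem augSubmodule_pow_three_le_ker {M : Type*} [AddCommGroup M] [Module R M]
    {φ : MonoidAlgebra R H →ₗ[R] M}
    (hφ : ∀ a b c, φ ((of R H (a * b) - 1) * (of R H c - 1)) =
      φ ((of R H a - 1) * (of R H c - 1)) + φ ((of R H b - 1) * (of R H c - 1))) :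
    augSubmodule R H ^ 3 ≤ LinearMap.ker φ := by
  rw [pow_succ, pow_two, augSubmodule, Submodule.span_mul_span, Submodule.span_mul_span,
    Submodule.span_le]
  rintro _ ⟨_, ⟨_, ⟨a, rfl⟩, _, ⟨b, rfl⟩, rfl⟩, _, ⟨c, rfl⟩, rfl⟩
  have := hφ a b c
  rwa [of_mul_sub_one, add_mul, add_mul, map_add, map_add, add_eq_right] at this

end GroupAlgebra

theorem abMk_surjective {H : Type*} [Group H] : Function.Surjective (abMk : H → abQuot H) :=
  Additive.ofMul.surjective.comp QuotientGroup.mk_surjective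

theorem abMk_one {H : Type*} [Group H] : abMk (1 : H) = 0 := by
  simp [abMk]

theorem abMk_mul {H : Type*} [Group H] (a b : H) : abMk (a * b) = abMk a + abMk b := by
  simp [abMk]

section QuadraticExtension

variable {H T : Type*} [Group H] [AddCommGroup T] {β : abQuot H →ₗ[ℤ] abQuot H →ₗ[ℤ] T}
  (hβ : ∀ x y, β x y = β y x) (m : ℕ)

/-- The linear extension to the group algebra of the negated section `H/H₂ → E/mE`, for the
extension `E` with cocycle `β`. -/
noncomputable def groupAlgebraToExtension :
    MonoidAlgebra (ZMod m) H →ₗ[ZMod m] ModN (SymmExtension β hβ) m :=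
  (MonoidAlgebra.basis H (ZMod m)).constr (ZMod m)
    fun a ↦ SymmExtension.negSectionModN β hβ m (abMk a)

theorem groupAlgebraToExtension_of (a : H) :
    groupAlgebraToExtension hβ m (of (ZMod m) H a) =
      SymmExtension.negSectionModN β hβ m (abMk a) := by
  have : of (ZMod m) H a = MonoidAlgebra.basis H (ZMod m) a := by simp
  rw [this, groupAlgebraToExtension, Module.Basis.constr_basis]

theorem groupAlgebraToExtension_mul (a b : H) :
    groupAlgebraToExtension hβ m ((of (ZMod m) H a - 1) * (of (ZMod m) H b - 1)) =
      SymmExtension.inlModN β hβ m (β (abMk a) (abMk b)) := by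
  have expand : (of (ZMod m) H a - 1) * (of (ZMod m) H b - 1) =
      of (ZMod m) H (a * b) - of (ZMod m) H a - of (ZMod m) H b + of (ZMod m) H 1 := by
    rw [map_mul, map_one]
    noncomm_ring
  simp only [expand, map_add, map_sub, groupAlgebraToExtension_of, abMk_mul, abMk_one,
    SymmExtension.negSectionModN_add, SymmExtension.negSectionModN_zero]
  abel

theorem augSubmodule_pow_three_le_ker_groupAlgebraToExtension :
    augSubmodule (ZMod m) H ^ 3 ≤ LinearMap.ker (groupAlgebraToExtension hβ m) :=
  augSubmodule_pow_three_le_ker fun a b c ↦ by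
    simp only [groupAlgebraToExtension_mul, abMk_mul, map_add, LinearMap.add_apply]

end QuadraticExtension

section TensorZMod

variable {A : Type*} [AddCommGroup A] {m : ℕ}

theorem nsmul_tensor_zmod_eq_zero (t : A ⊗[ℤ] ZMod m) : m • t = 0 := by
  induction t using TensorProduct.induction_on with
  | zero => exact smul_zero m
  | tmul x r => rw [← TensorProduct.tmul_smul, ZModModule.char_nsmul_eq_zero, tmul_zero]
  | add s t hs ht => rw [smul_add, hs, ht, add_zero]

theorem two_mul_choose_two_nsmul_tensor_zmod_eq_zero (t : A ⊗[ℤ] ZMod m) :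
    (2 * m.choose 2) • t = 0 := by
  rw [Nat.choose_two_right, Nat.mul_div_cancel' (Nat.even_mul_pred_self m).two_dvd, mul_comm,
    mul_smul, nsmul_tensor_zmod_eq_zero, smul_zero]

variable (A m) in
/-- The bilinear map `(x, y) ↦ x ⊗ y ⊗ 1`. -/
def tmulOne : A →ₗ[ℤ] A →ₗ[ℤ] (A ⊗[ℤ] A) ⊗[ℤ] ZMod m :=
  (TensorProduct.mk ℤ A A).compr₂ ((TensorProduct.mk ℤ (A ⊗[ℤ] A) (ZMod m)).flip 1)

@[simp]
theorem tmulOne_apply (x y : A) : tmulOne A m x y = (x ⊗ₜ[ℤ] y) ⊗ₜ[ℤ] (1 : ZMod m) := rfl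

theorem tensor_zmod_addHom_ext {M : Type*} [AddCommGroup M]
    {f g : (A ⊗[ℤ] A) ⊗[ℤ] ZMod m →+ M} (h : ∀ x y, f (tmulOne A m x y) = g (tmulOne A m x y)) :
    f = g := by
  have on_tmul (z : A ⊗[ℤ] A) (r : ZMod m) : f (z ⊗ₜ r) = g (z ⊗ₜ r) := by
    obtain ⟨k, rfl⟩ := ZMod.intCast_surjective r
    induction z using TensorProduct.induction_on with
    | zero => simp only [zero_tmul, map_zero]
    | tmul x y =>
      have tmul_intCast : (x ⊗ₜ[ℤ] y) ⊗ₜ[ℤ] (k : ZMod m) = k • tmulOne A m x y := by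
        rw [tmulOne_apply, ← TensorProduct.tmul_smul, zsmul_one]
      rw [tmul_intCast, map_zsmul, map_zsmul, h]
    | add s t hs ht => simp only [add_tmul, map_add, hs, ht]
  ext t
  induction t using TensorProduct.induction_on with
  | zero => rw [map_zero, map_zero]
  | tmul z r => exact on_tmul z r
  | add s t hs ht => rw [map_add, map_add, hs, ht]

end TensorZMod

section Fox

variable {H : Type*} [Group H] {m : ℕ}

variable (H m) in
/-- The subgroup `H₂H^m`. -/
abbrev commutatorPowSubgroup : Subgroup H :=
  commutator H ⊔ Subgroup.closure {x : H | ∃ a : H, x = a ^ m}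

theorem commutatorPowSubgroup_le_iff {S : Subgroup H} :
    commutatorPowSubgroup H m ≤ S ↔ (∀ a b : H, ⁅a, b⁆ ∈ S) ∧ ∀ a, a ^ m ∈ S := by
  rw [sup_le_iff, commutator_def, Subgroup.commutator_le, Subgroup.closure_le]
  simp [Set.subset_def]

theorem commutator_mem_commutatorPowSubgroup (a b : H) : ⁅a, b⁆ ∈ commutatorPowSubgroup H m :=
  (commutatorPowSubgroup_le_iff.1 le_rfl).1 a b

theorem pow_mem_commutatorPowSubgroup (a : H) : a ^ m ∈ commutatorPowSubgroup H m :=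
  (commutatorPowSubgroup_le_iff.1 le_rfl).2 a

theorem mk_of_pow_sub_one_zmod (a : H) :
    (Submodule.Quotient.mk (of (ZMod m) H (a ^ m) - 1) :
        MonoidAlgebra (ZMod m) H ⧸ augSubmodule (ZMod m) H ^ 3) =
      Submodule.Quotient.mk
        (m.choose 2 • ((of (ZMod m) H a - 1) * (of (ZMod m) H a - 1))) := by
  rw [mk_of_pow_sub_one, ZModModule.char_nsmul_eq_zero, zero_add]

theorem commutatorPowSubgroup_le_dimensionSubgroup :
    commutatorPowSubgroup H m ≤ dimensionSubgroup (ZMod m) H 2 := by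
  have mem_of_mk_eq {x y : MonoidAlgebra (ZMod m) H} (hy : y ∈ augSubmodule (ZMod m) H ^ 2)
      (h : (Submodule.Quotient.mk x : _ ⧸ augSubmodule (ZMod m) H ^ 3) = Submodule.Quotient.mk y) :
      x ∈ augSubmodule (ZMod m) H ^ 2 := by
    rw [← sub_add_cancel x y]
    exact add_mem (augSubmodule_pow_succ_le ((Submodule.Quotient.eq _).1 h)) hy
  refine commutatorPowSubgroup_le_iff.2 ⟨fun a b ↦ ?_, fun a ↦ ?_⟩
  · exact mem_of_mk_eq (sub_mem (of_sub_one_mul_of_sub_one_mem a b)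
      (of_sub_one_mul_of_sub_one_mem b a)) (mk_of_commutator_sub_one a b)
  · exact mem_of_mk_eq (nsmul_mem (of_sub_one_mul_of_sub_one_mem a a) _) (mk_of_pow_sub_one_zmod a)

variable (H m) in
/-- The homomorphism `p : H₂H^m → R(H) / I_R³(H)`, `h ↦ h - 1`. -/
noncomputable def commutatorPowHom : Additive (commutatorPowSubgroup H m) →+
    MonoidAlgebra (ZMod m) H ⧸ augSubmodule (ZMod m) H ^ 3 :=
  (ofSubOneHom (ZMod m) H 2).comp
    (Subgroup.inclusion commutatorPowSubgroup_le_dimensionSubgroup).toAdditive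

theorem mem_range_commutatorPowHom {x : MonoidAlgebra (ZMod m) H ⧸ augSubmodule (ZMod m) H ^ 3} :
    x ∈ (commutatorPowHom H m).range ↔ ∃ h ∈ commutatorPowSubgroup H m,
      x = Submodule.Quotient.mk (of (ZMod m) H h - 1) :=
  ⟨fun ⟨h, hx⟩ ↦ ⟨h.toMul, h.toMul.2, hx.symm⟩, fun ⟨h, hh, hx⟩ ↦ ⟨.ofMul ⟨h, hh⟩, hx.symm⟩⟩

theorem range_commutatorPowHom_le_iff
    {N : AddSubgroup (MonoidAlgebra (ZMod m) H ⧸ augSubmodule (ZMod m) H ^ 3)} :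
    (commutatorPowHom H m).range ≤ N ↔
      (∀ a b : H, Submodule.Quotient.mk (of (ZMod m) H ⁅a, b⁆ - 1) ∈ N) ∧
        ∀ a : H, Submodule.Quotient.mk (of (ZMod m) H (a ^ m) - 1) ∈ N := by
  constructor
  · intro hN
    exact ⟨fun a b ↦ hN (mem_range_commutatorPowHom.2
        ⟨_, commutator_mem_commutatorPowSubgroup a b, rfl⟩),
      fun a ↦ hN (mem_range_commutatorPowHom.2 ⟨_, pow_mem_commutatorPowSubgroup a, rfl⟩)⟩
  · rintro ⟨hcomm, hpow⟩ _ ⟨⟨h, hh⟩, rfl⟩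
    have le_map : commutatorPowSubgroup H m ≤
        (N.comap (commutatorPowHom H m)).toSubgroup'.map (commutatorPowSubgroup H m).subtype :=
      commutatorPowSubgroup_le_iff.2
        ⟨fun a b ↦ ⟨⟨_, commutator_mem_commutatorPowSubgroup a b⟩, hcomm a b, rfl⟩,
          fun a ↦ ⟨⟨_, pow_mem_commutatorPowSubgroup a⟩, hpow a, rfl⟩⟩
    obtain ⟨k, hk, rfl⟩ := le_map hh
    exact hk

variable {μ : ((abQuot H ⊗[ℤ] abQuot H) ⊗[ℤ] ZMod m) →ₗ[ℤ]
    (MonoidAlgebra (ZMod m) H ⧸ (augSubmodule (ZMod m) H ^ 3))}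

section

variable (hμ : ∀ a b : H, μ (tmulOne _ m (abMk a) (abMk b)) =
    Submodule.Quotient.mk ((of (ZMod m) H a - 1) * (of (ZMod m) H b - 1)))

include hμ

theorem map_tmulOne_sub_swap (a b : H) :
    μ (tmulOne _ m (abMk a) (abMk b) - tmulOne _ m (abMk b) (abMk a)) =
      Submodule.Quotient.mk (of (ZMod m) H ⁅a, b⁆ - 1) := by
  rw [map_sub, hμ, hμ, ← Submodule.Quotient.mk_sub, mk_of_commutator_sub_one]

theorem map_choose_two_nsmul_tmulOne_self (a : H) :
    μ (m.choose 2 • tmulOne _ m (abMk a) (abMk a)) =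
      Submodule.Quotient.mk (of (ZMod m) H (a ^ m) - 1) := by
  rw [map_nsmul, hμ, mk_of_pow_sub_one_zmod]
  rfl

theorem map_antisymmSquareSpan :
    (antisymmSquareSpan (tmulOne (abQuot H) m) (m.choose 2)).map μ =
      (commutatorPowHom H m).range.toIntSubmodule := by
  apply le_antisymm
  · rw [Submodule.map_le_iff_le_comap, antisymmSquareSpan_le_iff, abMk_surjective.forall₂,
      abMk_surjective.forall]
    simp only [Submodule.mem_comap, map_tmulOne_sub_swap hμ, map_choose_two_nsmul_tmulOne_self hμ]
    exact range_commutatorPowHom_le_iff.1 le_rfl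
  · exact (range_commutatorPowHom_le_iff (N := (Submodule.map μ _).toAddSubgroup)).2
      ⟨fun a b ↦ ⟨_, sub_swap_mem_antisymmSquareSpan _ _, map_tmulOne_sub_swap hμ a b⟩,
        fun a ↦ ⟨_, nsmul_self_mem_antisymmSquareSpan _, map_choose_two_nsmul_tmulOne_self hμ a⟩⟩

theorem ker_le_antisymmSquareSpan :
    LinearMap.ker μ ≤ antisymmSquareSpan (tmulOne (abQuot H) m) (m.choose 2) := by
  set Y := antisymmSquareSpan (tmulOne (abQuot H) m) (m.choose 2)
  let β := (tmulOne (abQuot H) m).compr₂ Y.mkQ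
  have hβ (x y) : β x y = β y x :=
    (Submodule.Quotient.eq Y).2 (sub_swap_mem_antisymmSquareSpan x y)
  have hdiag (x) : m.choose 2 • β x x = 0 :=
    (Submodule.Quotient.mk_eq_zero Y).2 (nsmul_self_mem_antisymmSquareSpan x)
  have htorsion (t : _ ⧸ Y) : m • t = 0 := by
    obtain ⟨t, rfl⟩ := Y.mkQ_surjective t
    rw [← map_nsmul, nsmul_tensor_zmod_eq_zero, map_zero]
  let φ := (augSubmodule (ZMod m) H ^ 3).liftQ (groupAlgebraToExtension hβ m)
    (augSubmodule_pow_three_le_ker_groupAlgebraToExtension hβ m)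
  have φ_comp_μ : φ.toAddMonoidHom.comp μ.toAddMonoidHom =
      (SymmExtension.inlModN β hβ m).comp Y.mkQ.toAddMonoidHom := by
    refine tensor_zmod_addHom_ext (abMk_surjective.forall₂.2 fun a b ↦ ?_)
    exact (congrArg φ (hμ a b)).trans (groupAlgebraToExtension_mul hβ m a b)
  intro t ht
  have inl_eq_zero : SymmExtension.inlModN β hβ m (Y.mkQ t) = 0 :=
    (DFunLike.congr_fun φ_comp_μ t).symm.trans ((congrArg φ ht).trans (map_zero φ))
  exact (Submodule.Quotient.mk_eq_zero Y).1
    ((injective_iff_map_eq_zero _).1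
      (SymmExtension.inlModN_injective htorsion hdiag) _ inl_eq_zero)

theorem comap_range_commutatorPowHom :
    (commutatorPowHom H m).range.toIntSubmodule.comap μ =
      antisymmSquareSpan (tmulOne (abQuot H) m) (m.choose 2) := by
  rw [← map_antisymmSquareSpan hμ, Submodule.comap_map_eq, sup_eq_left]
  exact ker_le_antisymmSquareSpan hμ

end

theorem mem_antisymmSquareSpan_tmulOne_iff
    {ℓ : wedgeSquare (abQuot H) →ₗ[ℤ] (abQuot H ⊗[ℤ] abQuot H) ⊗[ℤ] ZMod m}
    (hℓ : ∀ x y, ℓ (Submodule.Quotient.mk (x ⊗ₜ[ℤ] y)) = tmulOne _ m x y - tmulOne _ m y x)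
    {t : (abQuot H ⊗[ℤ] abQuot H) ⊗[ℤ] ZMod m} :
    t ∈ antisymmSquareSpan (tmulOne (abQuot H) m) (m.choose 2) ↔
      ∃ w, ∃ h : H, t = ℓ w + m.choose 2 • tmulOne _ m (abMk h) (abMk h) := by
  rw [mem_antisymmSquareSpan_iff fun _ _ ↦ two_mul_choose_two_nsmul_tensor_zmod_eq_zero _,
    ← range_eq_antisymmSpan hℓ, abMk_surjective.exists, exists_comm]
  simp only [LinearMap.mem_range, eq_sub_iff_add_eq, eq_comm (a := t)]

end Fox

/-- **Lemma 3.5**: let `H` be a group, `m ≥ 0`, `R = ℤ/mℤ`, and let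
`μ : (H/H₂) ⊗ (H/H₂) ⊗ R → R(H)/I_R³(H)` be the homomorphism with
`μ(aH₂ ⊗ bH₂ ⊗ r) = r·(a-1)(b-1) + I_R³(H)` (its values lie in `I_R²(H)/I_R³(H)`,
which injects into `R(H)/I_R³(H)`), and let
`ℓ : (H/H₂)∧(H/H₂) → (H/H₂)⊗(H/H₂)⊗R` send `x∧y` to `x⊗y⊗1 - y⊗x⊗1`.
Then the preimage under `μ` of the set of classes of `h' - 1`, `h' ∈ H₂H^m`, equals
`Y = Im(ℓ) + {C(m,2)·(hH₂ ⊗ hH₂ ⊗ 1) | h ∈ H}`; in particular `Y` is a subgroup. -/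
theorem fox_quadratic_preimage_lemma (H : Type*) [Group H] (m : ℕ)
    (μ : ((abQuot H ⊗[ℤ] abQuot H) ⊗[ℤ] ZMod m) →ₗ[ℤ]
      (MonoidAlgebra (ZMod m) H ⧸ (augSubmodule (ZMod m) H ^ 3)))
    (hμ : ∀ (a b : H) (r : ZMod m),
      μ ((abMk a ⊗ₜ[ℤ] abMk b) ⊗ₜ[ℤ] r) =
        Submodule.Quotient.mk (r • ((of (ZMod m) H a - 1) * (of (ZMod m) H b - 1))))
    (ℓ : wedgeSquare (abQuot H) →ₗ[ℤ] (abQuot H ⊗[ℤ] abQuot H) ⊗[ℤ] ZMod m)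
    (hℓ : ∀ x y : abQuot H,
      ℓ (Submodule.Quotient.mk (x ⊗ₜ[ℤ] y)) =
        (x ⊗ₜ[ℤ] y) ⊗ₜ[ℤ] (1 : ZMod m) - (y ⊗ₜ[ℤ] x) ⊗ₜ[ℤ] (1 : ZMod m)) :
    {t : (abQuot H ⊗[ℤ] abQuot H) ⊗[ℤ] ZMod m |
        ∃ h' ∈ commutator H ⊔ Subgroup.closure {x : H | ∃ a : H, x = a ^ m},
          μ t = Submodule.Quotient.mk (of (ZMod m) H h' - 1)} =
      {t | ∃ w : wedgeSquare (abQuot H), ∃ h : H,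
        t = ℓ w + (m.choose 2) • ((abMk h ⊗ₜ[ℤ] abMk h) ⊗ₜ[ℤ] (1 : ZMod m))} ∧
    ∀ y₁ ∈ {t : (abQuot H ⊗[ℤ] abQuot H) ⊗[ℤ] ZMod m |
        ∃ w : wedgeSquare (abQuot H), ∃ h : H,
          t = ℓ w + (m.choose 2) • ((abMk h ⊗ₜ[ℤ] abMk h) ⊗ₜ[ℤ] (1 : ZMod m))},
      ∀ y₂ ∈ {t : (abQuot H ⊗[ℤ] abQuot H) ⊗[ℤ] ZMod m |
        ∃ w : wedgeSquare (abQuot H), ∃ h : H,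
          t = ℓ w + (m.choose 2) • ((abMk h ⊗ₜ[ℤ] abMk h) ⊗ₜ[ℤ] (1 : ZMod m))},
      y₁ - y₂ ∈ {t : (abQuot H ⊗[ℤ] abQuot H) ⊗[ℤ] ZMod m |
        ∃ w : wedgeSquare (abQuot H), ∃ h : H,
          t = ℓ w + (m.choose 2) • ((abMk h ⊗ₜ[ℤ] abMk h) ⊗ₜ[ℤ] (1 : ZMod m))} := by
  have hμ_one (a b : H) : μ (tmulOne _ m (abMk a) (abMk b)) =
      Submodule.Quotient.mk ((of (ZMod m) H a - 1) * (of (ZMod m) H b - 1)) := by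
    rw [tmulOne_apply, hμ, one_smul]
  have mem_iff {t} := mem_antisymmSquareSpan_tmulOne_iff (t := t) hℓ
  refine ⟨?_, fun y₁ h₁ y₂ h₂ ↦ mem_iff.1 (sub_mem (mem_iff.2 h₁) (mem_iff.2 h₂))⟩
  ext t
  exact mem_range_commutatorPowHom.symm.trans <|
    (SetLike.ext_iff.1 (comap_range_commutatorPowHom hμ_one) t).trans mem_iff
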